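/- Suppose that ε_ħ/ħ² → ∞ and ε_ħ ħ^{−3/2} → 0 as ħ → 0⁺. Then for the periodized coherent state ψ_ħ with ξ₀ ≠ 0, for every primitive rank-1 sublattice Λ ⊆ ℤ² and every smooth compactly supported a : 𝕋² × ℝ → ℂ, one has W_{Λ,ħ}(a) → 0 as ħ → 0⁺. -/

import Mathlib

open MeasureTheory Filter Real
open scoped Topology

noncomputable section

/-- The Euclidean inner product on `ℝ²`. -/
def dot2 (v w : ℝ × ℝ) : ℝ := v.1 * w.1 + v.2 * w.2

/-- The Euclidean norm on `ℝ²`. -/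
def nrm2 (v : ℝ × ℝ) : ℝ := Real.sqrt (dot2 v v)

/-- The canonical embedding `ℤ² ↪ ℝ²`. -/
def toR2 (m : ℤ × ℤ) : ℝ × ℝ := ((m.1 : ℝ), (m.2 : ℝ))

/-- Rotation of an integer vector by `+π/2`. -/
def perpZ (v : ℤ × ℤ) : ℤ × ℤ := (-v.2, v.1)

/-- `v` generates a primitive rank-1 sublattice `Λ = ℤ v` of `ℤ²`. -/
def Primitive (v : ℤ × ℤ) : Prop := Int.gcd v.1 v.2 = 1

/-- `L_Λ = ‖v_Λ‖`. -/
def LL (v : ℤ × ℤ) : ℝ := nrm2 (toR2 v)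

/-- `H_Λ(ξ) = ⟨ξ, v_Λ⟩ / L_Λ`, where `v` is the generator `v_Λ` of `Λ`. -/
def HH (v : ℤ × ℤ) (ξ : ℝ × ℝ) : ℝ := dot2 ξ (toR2 v) / LL v

/-- Integral over a fundamental domain of the torus `𝕋² = ℝ²/ℤ²`. -/
def torusInt (f : ℝ × ℝ → ℂ) : ℂ :=
  ∫ x in Set.Icc ((0, 0) : ℝ × ℝ) ((1, 1) : ℝ × ℝ), f x

/-- `e^{it}`. -/
def expI (t : ℝ) : ℂ := Complex.exp (Complex.I * (t : ℂ))

/-- The `j`-th Fourier coefficient (in `x`) of `a : 𝕋² × ℝ → ℂ`: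
`â(j, η) = ∫_{𝕋²} a(x, η) e^{-2πi j·x} dx`. -/
def fcoef (a : ℝ × ℝ → ℝ → ℂ) (j : ℤ × ℤ) (η : ℝ) : ℂ :=
  torusInt fun x => a x η * expI (-(2 * π * dot2 (toR2 j) x))

/-- The Fourier transform on `ℝ²`: `φ̂(ξ) = ∫_{ℝ²} φ(x) e^{-2πi x·ξ} dx`. -/
def FT (φ : ℝ × ℝ → ℂ) (ξ : ℝ × ℝ) : ℂ :=
  ∫ x : ℝ × ℝ, φ x * expI (-(2 * π * dot2 x ξ))

/-- The `m`-th Fourier coefficient of the periodized coherent state: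
`ψ̂_hb(m) = hb^{1/2} e^{-2πi (m - ξ₀/hb)·x₀} φ̂(hb^{1/2}(m - ξ₀/hb))`. -/
def psiF (φ : ℝ × ℝ → ℂ) (x₀ ξ₀ : ℝ × ℝ) (hb : ℝ) (m : ℤ × ℤ) : ℂ :=
  (Real.sqrt hb : ℂ) * expI (-(2 * π * dot2 (toR2 m - hb⁻¹ • ξ₀) x₀)) *
    FT φ (Real.sqrt hb • (toR2 m - hb⁻¹ • ξ₀))

/-- The two-microlocal quantity
`W_{Λ,hb}(a) = Σ_{m ∈ ℤ²} Σ_{j ∈ Λ} conj(ψ̂_hb(m)) ψ̂_hb(m−j) â(j, 2π hb² ε_hb⁻¹ H_Λ(m))`,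
for the periodized coherent state, where `Λ = ℤ w` and `e = ε_hb`. -/
def Wcs (φ : ℝ × ℝ → ℂ) (x₀ ξ₀ : ℝ × ℝ) (w : ℤ × ℤ) (a : ℝ × ℝ → ℝ → ℂ)
    (hb e : ℝ) : ℂ :=
  ∑' m : ℤ × ℤ, ∑' c : ℤ,
    (starRingEnd ℂ) (psiF φ x₀ ξ₀ hb m) * psiF φ x₀ ξ₀ hb (m - c • w) *
      fcoef a (c • w) (2 * π * hb ^ 2 / e * HH w (toR2 m))

/-- The average of `a` along the periodic flow in the direction `v_Λ^⊥/L_Λ`: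
`I_Λ(a)(x, η) = L_Λ⁻¹ ∫₀^{L_Λ} a(x + t v_Λ^⊥/L_Λ, η) dt`. -/
def IΛ (w : ℤ × ℤ) (a : ℝ × ℝ → ℝ → ℂ) (x : ℝ × ℝ) (η : ℝ) : ℂ :=
  ((LL w : ℝ) : ℂ)⁻¹ * ∫ t in (0:ℝ)..(LL w), a (x + (t / LL w) • toR2 (perpZ w)) η

/-!
Integrating by parts twice gives `|φ̂(ξ)| ≲ (1 + ⟨w^⊥, ξ⟩²)⁻¹` and `|â(c w, η)| ≲ (1 + c²)⁻¹`, while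
`â(·, η)` vanishes for `|η| ≥ R`. Hence only the frequencies `m` in the strip `|⟨m, w⟩| ≲ ε/ħ²`
contribute to `W`, and the integer `⟨m, w⟩` takes `O(1 + ε/ħ²)` values there. At scale `ħ^{-1/2}`,
on each of these lattice lines, `Σ_m |ψ̂(m)| ≲ ħ^{1/2} · ħ^{-1/2}`; together with the uniform bound
`|ψ̂(m - c w)| ≲ ħ^{1/2}` this gives `|W| ≲ ħ^{1/2} (1 + ε/ħ²) = ħ^{1/2} + ε ħ^{-3/2}`.
-/

/-- The inner product of `ℤ²`, kept integer-valued so that `ℤ²` can be summed along its level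
lines. -/
def dotZ (v w : ℤ × ℤ) : ℤ := v.1 * w.1 + v.2 * w.2

/-- The plane wave `x ↦ e^{-2πi k·x}` against which Fourier coefficients on `𝕋²` and Fourier
transforms on `ℝ²` are computed. -/
def planeWave (k x : ℝ × ℝ) : ℂ := expI (-(2 * π * dot2 k x))

/-- The directional derivative `∂_v f`, the derivation used in the integrations by parts. -/
def dirDeriv (v : ℝ × ℝ) (f : ℝ × ℝ → ℂ) (x : ℝ × ℝ) : ℂ := fderiv ℝ f x v

/-- `ℤ²`-periodicity, that is, `f` is the lift to `ℝ²` of a function on `𝕋²`. -/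
def TorusPeriodic (f : ℝ × ℝ → ℂ) : Prop := ∀ j : ℤ × ℤ, Function.Periodic f (toR2 j)

lemma dot2_comm (v w : ℝ × ℝ) : dot2 v w = dot2 w v := by
  simp only [dot2, mul_comm]

lemma dot2_add_right (v x y : ℝ × ℝ) : dot2 v (x + y) = dot2 v x + dot2 v y := by
  simp only [dot2, Prod.fst_add, Prod.snd_add]; ring

lemma dot2_sub_right (v x y : ℝ × ℝ) : dot2 v (x - y) = dot2 v x - dot2 v y := by
  simp only [dot2, Prod.fst_sub, Prod.snd_sub]; ring

lemma dot2_smul_right (r : ℝ) (v x : ℝ × ℝ) : dot2 v (r • x) = r * dot2 v x := by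
  simp only [dot2, Prod.smul_fst, Prod.smul_snd, smul_eq_mul]; ring

lemma dot2_toR2 (v w : ℤ × ℤ) : dot2 (toR2 v) (toR2 w) = dotZ v w := by
  simp only [dot2, toR2, dotZ]; push_cast; rfl

lemma toR2_zsmul (c : ℤ) (w : ℤ × ℤ) : toR2 (c • w) = (c : ℝ) • toR2 w := by
  simp [toR2]

lemma dotZ_self_pos {w : ℤ × ℤ} (hw : w ≠ 0) : 0 < dotZ w w := by
  have hne : w.1 ≠ 0 ∨ w.2 ≠ 0 := by
    by_contra! h
    exact hw (Prod.ext h.1 h.2)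
  rcases hne with h | h <;> simp only [dotZ, ← sq] <;> positivity

lemma LL_pos {w : ℤ × ℤ} (hw : w ≠ 0) : 0 < LL w := by
  rw [LL, nrm2, dot2_toR2]
  exact Real.sqrt_pos.2 (mod_cast dotZ_self_pos hw)

lemma injective_dotZ_perpZ {w : ℤ × ℤ} (hw : w ≠ 0) :
    Function.Injective fun m : ℤ × ℤ => (dotZ m w, dotZ (perpZ w) m) := by
  intro m m' h
  simp only [dotZ, perpZ, Prod.mk.injEq] at h
  obtain ⟨h₁, h₂⟩ := h
  have hww : w.1 * w.1 + w.2 * w.2 ≠ 0 := (dotZ_self_pos hw).ne'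
  refine Prod.ext (mul_left_cancel₀ hww ?_) (mul_left_cancel₀ hww ?_)
  · linear_combination w.1 * h₁ - w.2 * h₂
  · linear_combination w.2 * h₁ + w.1 * h₂

section PlaneWave

lemma norm_planeWave (k x : ℝ × ℝ) : ‖planeWave k x‖ = 1 := by
  rw [planeWave, expI, mul_comm, Complex.norm_exp_ofReal_mul_I]

lemma planeWave_comm (k x : ℝ × ℝ) : planeWave k x = planeWave x k := by
  rw [planeWave, dot2_comm, planeWave]

lemma contDiff_planeWave {n : WithTop ℕ∞} (k : ℝ × ℝ) : ContDiff ℝ n (planeWave k) := by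
  unfold planeWave expI dot2
  have : ContDiff ℝ n fun t : ℝ => (t : ℂ) := Complex.ofRealCLM.contDiff
  fun_prop

lemma dirDeriv_planeWave (v k x : ℝ × ℝ) :
    dirDeriv v (planeWave k) x = -(2 * π * Complex.I * dot2 k v) * planeWave k x := by
  have hphase :
      HasDerivAt (fun t : ℝ => -(2 * π * dot2 k (x + t • v))) (-(2 * π * dot2 k v)) 0 := by
    simp only [dot2_add_right, dot2_smul_right]
    simpa using ((((hasDerivAt_id (0 : ℝ)).mul_const (dot2 k v)).const_add
      (dot2 k x)).const_mul (2 * π)).fun_neg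
  have hwave := (hphase.ofReal_comp.const_mul Complex.I).cexp.deriv
  have hdiff := (contDiff_planeWave (n := 1) k).differentiable one_ne_zero x
  rw [dirDeriv, ← hdiff.lineDeriv_eq_fderiv, lineDeriv]
  refine hwave.trans ?_
  simp only [zero_smul, add_zero, planeWave, expI]
  push_cast
  ring

lemma torusPeriodic_planeWave (j : ℤ × ℤ) : TorusPeriodic (planeWave (toR2 j)) := by
  intro l x
  rw [planeWave, planeWave, dot2_add_right, dot2_toR2, expI, expI,
    Complex.exp_eq_exp_iff_exists_int]
  exact ⟨-dotZ j l, by push_cast; ring⟩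

lemma dirDeriv_mul_planeWave {f : ℝ × ℝ → ℂ} (hf : ContDiff ℝ 1 f) (v k x : ℝ × ℝ) :
    dirDeriv v (fun y => f y * planeWave k y) x =
      dirDeriv v f x * planeWave k x -
        2 * π * Complex.I * dot2 k v * (f x * planeWave k x) := by
  have hw := dirDeriv_planeWave v k x
  simp only [dirDeriv] at hw ⊢
  rw [fderiv_fun_mul (hf.differentiable one_ne_zero x)
    ((contDiff_planeWave (n := 1) k).differentiable one_ne_zero x)]
  simp only [add_apply, smul_apply, smul_eq_mul, hw]
  ring

lemma integral_dirDeriv_mul_planeWave {μ : Measure (ℝ × ℝ)} {f : ℝ × ℝ → ℂ} {v k : ℝ × ℝ}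
    (hf : ContDiff ℝ 1 f)
    (hzero : ∫ x, dirDeriv v (fun y => f y * planeWave k y) x ∂μ = 0)
    (hint : Integrable (fun x => f x * planeWave k x) μ)
    (hint' : Integrable (fun x => dirDeriv v f x * planeWave k x) μ) :
    ∫ x, dirDeriv v f x * planeWave k x ∂μ =
      2 * π * Complex.I * dot2 k v * ∫ x, f x * planeWave k x ∂μ := by
  simp only [dirDeriv_mul_planeWave hf] at hzero
  rwa [integral_sub hint' (hint.const_mul _), integral_const_mul, sub_eq_zero] at hzero

lemma contDiff_dirDeriv {f : ℝ × ℝ → ℂ} {m n : WithTop ℕ∞} (hf : ContDiff ℝ n f) (hmn : m + 1 ≤ n)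
    (v : ℝ × ℝ) : ContDiff ℝ m (dirDeriv v f) :=
  (hf.fderiv_right hmn).clm_apply contDiff_const

lemma contDiff_uncurry_dirDeriv {a : ℝ × ℝ → ℝ → ℂ} {m n : WithTop ℕ∞}
    (ha : ContDiff ℝ n (Function.uncurry a)) (hmn : m + 1 ≤ n) (v : ℝ × ℝ) :
    ContDiff ℝ m (Function.uncurry fun x η => dirDeriv v (fun y => a y η) x) := by
  have ha' : ContDiff ℝ n (Function.uncurry fun (p : (ℝ × ℝ) × ℝ) (y : ℝ × ℝ) => a y p.2) :=
    ha.comp (contDiff_snd.prodMk contDiff_fst.snd)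
  exact ha'.fderiv_apply contDiff_fst contDiff_const hmn

lemma norm_le_of_norm_two_pi_I_mul_sq_mul_le {z : ℂ} {t A B : ℝ} (hA : ‖z‖ ≤ A)
    (hB : ‖(2 * π * Complex.I * t) ^ 2 * z‖ ≤ B) : ‖z‖ ≤ (A + B) * (1 + t ^ 2)⁻¹ := by
  have hnorm : ‖(2 * π * Complex.I * t) ^ 2 * z‖ = (2 * π) ^ 2 * (t ^ 2 * ‖z‖) := by
    simp only [norm_mul, norm_pow, Complex.norm_I, Complex.norm_real, Complex.norm_ofNat,
      norm_eq_abs, mul_pow, sq_abs]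
    ring
  have hpi : 1 ≤ (2 * π) ^ 2 := one_le_pow₀ (by linarith [pi_gt_three])
  have ht : t ^ 2 * ‖z‖ ≤ B :=
    (le_mul_of_one_le_left (by positivity) hpi).trans (hnorm ▸ hB)
  rw [← div_eq_mul_inv, le_div_iff₀ (by positivity)]
  linarith

end PlaneWave

section FourierTransform

variable {φ : ℝ × ℝ → ℂ}

lemma FT_eq_integral_planeWave (φ : ℝ × ℝ → ℂ) (ξ : ℝ × ℝ) :
    FT φ ξ = ∫ x, φ x * planeWave ξ x := by
  simp only [planeWave_comm ξ]
  rfl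

lemma norm_FT_le (φ : ℝ × ℝ → ℂ) (ξ : ℝ × ℝ) : ‖FT φ ξ‖ ≤ ∫ x, ‖φ x‖ := by
  rw [FT_eq_integral_planeWave]
  refine (norm_integral_le_integral_norm _).trans_eq ?_
  simp only [norm_mul, norm_planeWave, mul_one]

lemma integral_dirDeriv_eq_zero (hφ : ContDiff ℝ 1 φ) (hφc : HasCompactSupport φ) (v : ℝ × ℝ) :
    ∫ x, dirDeriv v φ x = 0 := by
  have hφ' : Integrable fun x => fderiv ℝ φ x v :=
    (contDiff_dirDeriv hφ (zero_add 1).le v).continuous.integrable_of_hasCompactSupport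
      (hφc.fderiv_apply ℝ v)
  have hparts := integral_mul_fderiv_eq_neg_fderiv_mul_of_integrable (μ := volume)
    (f := fun _ : ℝ × ℝ => (1 : ℂ)) (g := φ) (v := v) (by simp) (by simpa using hφ')
    (by simpa using hφ.continuous.integrable_of_hasCompactSupport hφc)
    (fun _ _ => differentiableAt_const _) (fun x _ => hφ.differentiable one_ne_zero x)
  simpa [dirDeriv] using hparts

lemma FT_dirDeriv (hφ : ContDiff ℝ 1 φ) (hφc : HasCompactSupport φ) (v ξ : ℝ × ℝ) :
    FT (dirDeriv v φ) ξ = 2 * π * Complex.I * dot2 ξ v * FT φ ξ := by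
  have hwave : ContDiff ℝ 1 (planeWave ξ) := contDiff_planeWave ξ
  have hφ' : ContDiff ℝ 0 (dirDeriv v φ) := contDiff_dirDeriv hφ (zero_add 1).le v
  have hφc' : HasCompactSupport (dirDeriv v φ) := hφc.fderiv_apply ℝ v
  simp only [FT_eq_integral_planeWave]
  exact integral_dirDeriv_mul_planeWave hφ
    (integral_dirDeriv_eq_zero (hφ.mul hwave) hφc.mul_right v)
    ((hφ.mul hwave).continuous.integrable_of_hasCompactSupport hφc.mul_right)
    ((hφ'.continuous.mul hwave.continuous).integrable_of_hasCompactSupport hφc'.mul_right)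

lemma exists_norm_FT_le (hφ : ContDiff ℝ 2 φ) (hφc : HasCompactSupport φ) (v : ℝ × ℝ) :
    ∃ A : ℝ, ∀ ξ, ‖FT φ ξ‖ ≤ A * (1 + dot2 v ξ ^ 2)⁻¹ := by
  have hφ' : ContDiff ℝ 1 (dirDeriv v φ) := contDiff_dirDeriv hφ one_add_one_eq_two.le v
  refine ⟨(∫ x, ‖φ x‖) + ∫ x, ‖dirDeriv v (dirDeriv v φ) x‖, fun ξ => ?_⟩
  refine norm_le_of_norm_two_pi_I_mul_sq_mul_le (norm_FT_le φ ξ) ?_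
  have htwice : (2 * π * Complex.I * dot2 v ξ) ^ 2 * FT φ ξ = FT (dirDeriv v (dirDeriv v φ)) ξ := by
    rw [FT_dirDeriv hφ' (hφc.fderiv_apply ℝ v), FT_dirDeriv (hφ.of_le one_le_two) hφc,
      dot2_comm v ξ]
    ring
  exact htwice ▸ norm_FT_le _ ξ

end FourierTransform

section FourierCoefficients

lemma fcoef_eq_torusInt_planeWave (a : ℝ × ℝ → ℝ → ℂ) (j : ℤ × ℤ) (η : ℝ) :
    fcoef a j η = torusInt fun x => a x η * planeWave (toR2 j) x := rfl

protected lemma TorusPeriodic.dirDeriv {f : ℝ × ℝ → ℂ} (hf : TorusPeriodic f) (v : ℝ × ℝ) :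
    TorusPeriodic (dirDeriv v f) := by
  intro j x
  have hshift : (fun y => f (y + toR2 j)) = f := funext (hf j)
  rw [dirDeriv, ← fderiv_comp_add_right, hshift, dirDeriv]

lemma torusInt_dirDeriv_eq_zero {f : ℝ × ℝ → ℂ} (hf : ContDiff ℝ 1 f) (hper : TorusPeriodic f)
    (v : ℝ × ℝ) : torusInt (dirDeriv v f) = 0 := by
  have hderiv (r : ℝ) (x : ℝ × ℝ) :
      HasFDerivAt (fun y => (r : ℂ) * f y) ((r : ℂ) • fderiv ℝ f x) x :=
    (hf.differentiable one_ne_zero x).hasFDerivAt.const_mul (r : ℂ)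
  have hcont (r : ℝ) : Continuous fun y => (r : ℂ) * f y := hf.continuous.const_mul _
  have hsplit (x : ℝ × ℝ) : dirDeriv v f x =
      ((v.1 : ℂ) • fderiv ℝ f x) (1, 0) + ((v.2 : ℂ) • fderiv ℝ f x) (0, 1) := by
    have hv : v = v.1 • ((1, 0) : ℝ × ℝ) + v.2 • ((0, 1) : ℝ × ℝ) := by ext <;> simp
    rw [dirDeriv]
    conv_lhs => rw [hv, map_add, map_smul, map_smul]
    simp only [Complex.real_smul, smul_apply, smul_eq_mul]
  have hint : IntegrableOn (dirDeriv v f) (Set.Icc (0, 0) (1, 1)) :=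
    (contDiff_dirDeriv hf (zero_add 1).le v).continuous.continuousOn.integrableOn_compact
      isCompact_Icc
  have hdiv := integral_divergence_prod_Icc_of_hasFDerivAt_of_le _ _ _ _ (0, 0) (1, 1)
    (by simp [Prod.le_def]) (hcont v.1).continuousOn (hcont v.2).continuousOn
    (fun x _ => hderiv v.1 x) (fun x _ => hderiv v.2 x)
    (hint.congr_fun (fun x _ => hsplit x) measurableSet_Icc)
  have htop (x : ℝ) : f (x, 1) = f (x, 0) := by simpa [toR2] using hper (0, 1) (x, 0)
  have hright (y : ℝ) : f (1, y) = f (0, y) := by simpa [toR2] using hper (1, 0) (0, y)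
  simp only [← hsplit, htop, hright] at hdiv
  rw [torusInt, hdiv]
  ring

lemma torusInt_dirDeriv_mul_planeWave {f : ℝ × ℝ → ℂ} (hf : ContDiff ℝ 1 f)
    (hper : TorusPeriodic f) (v : ℝ × ℝ) (j : ℤ × ℤ) :
    torusInt (fun x => dirDeriv v f x * planeWave (toR2 j) x) =
      2 * π * Complex.I * dot2 (toR2 j) v * torusInt fun x => f x * planeWave (toR2 j) x := by
  have hwave : ContDiff ℝ 1 (planeWave (toR2 j)) := contDiff_planeWave _
  have hf' : ContDiff ℝ 0 (dirDeriv v f) := contDiff_dirDeriv hf (zero_add 1).le v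
  exact integral_dirDeriv_mul_planeWave hf
    (torusInt_dirDeriv_eq_zero (hf.mul hwave)
      (fun l => (hper l).mul (torusPeriodic_planeWave j l)) v)
    ((hf.mul hwave).continuous.continuousOn.integrableOn_compact isCompact_Icc)
    ((hf'.continuous.mul hwave.continuous).continuousOn.integrableOn_compact isCompact_Icc)

lemma norm_torusInt_le {f : ℝ × ℝ → ℂ} {M : ℝ}
    (hM : ∀ x ∈ Set.Icc ((0, 0) : ℝ × ℝ) (1, 1), ‖f x‖ ≤ M) : ‖torusInt f‖ ≤ M := by
  have hvol : volume.real (Set.Icc ((0, 0) : ℝ × ℝ) (1, 1)) = 1 := by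
    rw [Set.Icc_prod_eq, Measure.volume_eq_prod, measureReal_prod_prod]
    simp
  simpa [torusInt, hvol] using
    norm_setIntegral_le_of_norm_le_const (μ := volume) isCompact_Icc.measure_lt_top hM

variable {a : ℝ × ℝ → ℝ → ℂ} {R : ℝ}

lemma exists_norm_fcoef_le_const (ha : Continuous (Function.uncurry a))
    (hR : ∀ x η, R ≤ |η| → a x η = 0) : ∃ M : ℝ, ∀ j η, ‖fcoef a j η‖ ≤ M := by
  obtain ⟨M, hM⟩ := ((isCompact_Icc (a := ((0, 0) : ℝ × ℝ)) (b := (1, 1))).prod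
    (isCompact_Icc (a := -R) (b := R))).exists_bound_of_continuousOn ha.continuousOn
  refine ⟨max M 0, fun j η => norm_torusInt_le fun x hx => ?_⟩
  rw [norm_mul, ← planeWave, norm_planeWave, mul_one]
  rcases le_total R |η| with hη | hη
  · simp [hR x η hη]
  · exact (hM (x, η) ⟨hx, abs_le.1 hη⟩).trans (le_max_left _ _)

lemma fcoef_eq_zero (hR : ∀ x η, R ≤ |η| → a x η = 0) (j : ℤ × ℤ) {η : ℝ} (hη : R ≤ |η|) :
    fcoef a j η = 0 := by
  simp [fcoef, torusInt, hR _ η hη]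

lemma exists_norm_fcoef_le (ha : ContDiff ℝ 2 (Function.uncurry a))
    (hper : ∀ η, TorusPeriodic fun x => a x η) (hR : ∀ x η, R ≤ |η| → a x η = 0) (v : ℝ × ℝ) :
    ∃ K : ℝ, ∀ j η, ‖fcoef a j η‖ ≤ K * (1 + dot2 (toR2 j) v ^ 2)⁻¹ := by
  set a' : ℝ × ℝ → ℝ → ℂ := fun x η => dirDeriv v (fun y => a y η) x
  set a'' : ℝ × ℝ → ℝ → ℂ := fun x η => dirDeriv v (fun y => a' y η) x
  have hslice {n : WithTop ℕ∞} {b : ℝ × ℝ → ℝ → ℂ} (hb : ContDiff ℝ n (Function.uncurry b))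
      (η : ℝ) : ContDiff ℝ n fun x => b x η := hb.comp (contDiff_id.prodMk contDiff_const)
  have ha' : ContDiff ℝ 1 (Function.uncurry a') :=
    contDiff_uncurry_dirDeriv ha one_add_one_eq_two.le v
  have ha'' : ContDiff ℝ 0 (Function.uncurry a'') :=
    contDiff_uncurry_dirDeriv ha' (zero_add 1).le v
  have hR'' (x : ℝ × ℝ) (η : ℝ) (hη : R ≤ |η|) : a'' x η = 0 := by
    simp [a'', a', dirDeriv, hR _ η hη]
  obtain ⟨M, hM⟩ := exists_norm_fcoef_le_const ha.continuous hR
  obtain ⟨M'', hM''⟩ := exists_norm_fcoef_le_const ha''.continuous hR''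
  refine ⟨M + M'', fun j η => norm_le_of_norm_two_pi_I_mul_sq_mul_le (hM j η) ?_⟩
  have htwice : (2 * π * Complex.I * dot2 (toR2 j) v) ^ 2 * fcoef a j η = fcoef a'' j η := by
    simp only [fcoef_eq_torusInt_planeWave, a'']
    rw [torusInt_dirDeriv_mul_planeWave (hslice ha' η) ((hper η).dirDeriv v),
      torusInt_dirDeriv_mul_planeWave ((hslice ha η).of_le one_le_two) (hper η)]
    ring
  exact htwice ▸ hM'' j η

-- The derivative is taken along `w / |w|²`, whose inner product with `c • w` is exactly `c`.
lemma exists_norm_fcoef_zsmul_le (ha : ContDiff ℝ 2 (Function.uncurry a))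
    (hper : ∀ η, TorusPeriodic fun x => a x η) (hR : ∀ x η, R ≤ |η| → a x η = 0) {w : ℤ × ℤ}
    (hw : w ≠ 0) : ∃ K : ℝ, ∀ (c : ℤ) η, ‖fcoef a (c • w) η‖ ≤ K * (1 + (c : ℝ) ^ 2)⁻¹ := by
  obtain ⟨K, hK⟩ := exists_norm_fcoef_le ha hper hR ((dotZ w w : ℝ)⁻¹ • toR2 w)
  refine ⟨K, fun c η => ?_⟩
  have hww : (dotZ w w : ℝ) ≠ 0 := mod_cast (dotZ_self_pos hw).ne'
  have hdot : dot2 (toR2 (c • w)) ((dotZ w w : ℝ)⁻¹ • toR2 w) = c := by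
    rw [dot2_smul_right, toR2_zsmul, dot2_comm, dot2_smul_right, dot2_toR2]
    field_simp
  simpa only [hdot] using hK (c • w) η

end FourierCoefficients

section LatticeSums

lemma summable_and_tsum_le_integral {f : ℤ → ℝ} {g : ℝ → ℝ} (hf : ∀ n, 0 ≤ f n)
    (hg : Integrable g) (hfg : ∀ n : ℤ, ∀ y ∈ Set.Icc (n : ℝ) (n + 1), f n ≤ g y) :
    Summable f ∧ ∑' n, f n ≤ ∫ y, g y := by
  have hsum : HasSum (fun n : ℤ => ∫ y in (n : ℝ)..n + 1, g y) (∫ y, g y) := by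
    simpa only [zero_add] using hg.hasSum_intervalIntegral 0
  have hle (n : ℤ) : f n ≤ ∫ y in (n : ℝ)..n + 1, g y := by
    simpa using intervalIntegral.integral_mono_on (μ := volume) (by linarith)
      intervalIntegrable_const hg.intervalIntegrable (hfg n)
  have hf_sum : Summable f := .of_nonneg_of_le hf hle hsum.summable
  exact ⟨hf_sum, hasSum_le hle hf_sum.hasSum hsum⟩

lemma inv_one_add_sq_le_three_mul {x y : ℝ} (h : |y - x| ≤ 1) :
    (1 + x ^ 2)⁻¹ ≤ 3 * (1 + y ^ 2)⁻¹ := by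
  have hsq : (y - x) ^ 2 ≤ 1 := (sq_le_one_iff_abs_le_one _).2 h
  rw [← div_eq_mul_inv, inv_eq_one_div, div_le_div_iff₀ (by positivity) (by positivity)]
  linarith [sq_nonneg (y - 2 * x), sq_nonneg x]

lemma integral_inv_one_add_sq_mul_sub {s : ℝ} (hs : 0 < s) (q : ℝ) :
    ∫ y : ℝ, (1 + (s * (y - q)) ^ 2)⁻¹ = π / s := by
  rw [integral_sub_right_eq_self (fun y : ℝ => (1 + (s * y) ^ 2)⁻¹) q,
    Measure.integral_comp_mul_left (fun y : ℝ => (1 + y ^ 2)⁻¹) s,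
    integral_univ_inv_one_add_sq, abs_of_pos (inv_pos.2 hs), smul_eq_mul, div_eq_inv_mul]

lemma summable_and_tsum_inv_one_add_sq_le {s : ℝ} (hs : 0 < s) (hs1 : s ≤ 1) (q : ℝ) :
    Summable (fun n : ℤ => (1 + (s * (n - q)) ^ 2)⁻¹) ∧
      ∑' n : ℤ, (1 + (s * (n - q)) ^ 2)⁻¹ ≤ 3 * π / s := by
  have hint : Integrable fun y : ℝ => (1 + (s * (y - q)) ^ 2)⁻¹ :=
    (integrable_inv_one_add_sq.comp_mul_left' hs.ne').comp_sub_right q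
  rw [mul_div_assoc, ← integral_inv_one_add_sq_mul_sub hs q, ← integral_const_mul]
  refine summable_and_tsum_le_integral (fun n => by positivity) (hint.const_mul 3)
    fun n y hy => inv_one_add_sq_le_three_mul ?_
  rw [← mul_sub, sub_sub_sub_cancel_right, abs_of_nonneg (mul_nonneg hs.le (sub_nonneg.2 hy.1))]
  exact mul_le_one₀ hs1 (sub_nonneg.2 hy.1) (by linarith [hy.2])

lemma hasSum_ite_abs_le {B : ℝ} (hB : 0 ≤ B) :
    HasSum (fun n : ℤ => if |(n : ℝ)| ≤ B then (1 : ℝ) else 0) (2 * ⌊B⌋ + 1) := by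
  have hmem (n : ℤ) : |(n : ℝ)| ≤ B ↔ n ∈ Finset.Icc (-⌊B⌋) ⌊B⌋ := by
    rw [← Int.cast_abs, ← Int.le_floor, abs_le, Finset.mem_Icc]
  have hcard : ((Finset.Icc (-⌊B⌋) ⌊B⌋).card : ℝ) = 2 * ⌊B⌋ + 1 := by
    have hnonneg : 0 ≤ ⌊B⌋ + 1 - -⌊B⌋ := by linarith [Int.floor_nonneg.2 hB]
    rw [Int.card_Icc, ← Int.cast_natCast, Int.toNat_of_nonneg hnonneg]
    push_cast
    ring
  simp only [hmem]
  have hsum := hasSum_sum_of_ne_finset_zero (L := .unconditional ℤ)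
    (f := fun n : ℤ => if n ∈ Finset.Icc (-⌊B⌋) ⌊B⌋ then (1 : ℝ) else 0) (fun n hn => if_neg hn)
  rwa [Finset.sum_ite_mem, Finset.inter_self, Finset.sum_const, nsmul_one, hcard] at hsum

lemma summable_and_tsum_dotZ_mul_perpZ_le {w : ℤ × ℤ} (hw : w ≠ 0) {f g : ℤ → ℝ} (hf : 0 ≤ f)
    (hg : 0 ≤ g) (hf_sum : Summable f) (hg_sum : Summable g) :
    Summable (fun m => f (dotZ m w) * g (dotZ (perpZ w) m)) ∧
      ∑' m, f (dotZ m w) * g (dotZ (perpZ w) m) ≤ (∑' n, f n) * ∑' n, g n := by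
  have hprod : Summable fun p : ℤ × ℤ => f p.1 * g p.2 := hf_sum.mul_of_nonneg hg_sum hf hg
  have hinj := injective_dotZ_perpZ hw
  refine ⟨by simpa only [Function.comp_def] using hprod.comp_injective hinj, ?_⟩
  rw [hf_sum.tsum_mul_tsum hg_sum hprod]
  exact tsum_comp_le_tsum_of_inj hprod (fun p => mul_nonneg (hf p.1) (hg p.2)) hinj

lemma summable_and_tsum_strip_le {w : ℤ × ℤ} (hw : w ≠ 0) {s B : ℝ} (hs : 0 < s) (hs1 : s ≤ 1)
    (hB : 0 ≤ B) (q : ℝ) :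
    Summable (fun m : ℤ × ℤ => (if |(dotZ m w : ℝ)| ≤ B then (1 : ℝ) else 0) *
        (1 + (s * (dotZ (perpZ w) m - q)) ^ 2)⁻¹) ∧
      ∑' m : ℤ × ℤ, (if |(dotZ m w : ℝ)| ≤ B then (1 : ℝ) else 0) *
        (1 + (s * (dotZ (perpZ w) m - q)) ^ 2)⁻¹ ≤ (2 * B + 1) * (3 * π / s) := by
  have hcount := hasSum_ite_abs_le hB
  obtain ⟨hline, hline_le⟩ := summable_and_tsum_inv_one_add_sq_le hs hs1 q
  obtain ⟨hsum, hle⟩ := summable_and_tsum_dotZ_mul_perpZ_le hw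
    (f := fun n => if |(n : ℝ)| ≤ B then (1 : ℝ) else 0)
    (fun n => ite_nonneg zero_le_one le_rfl)
    (fun n => by positivity) hcount.summable hline
  refine ⟨hsum, hle.trans ?_⟩
  rw [hcount.tsum_eq]
  gcongr
  exact Int.floor_le B

end LatticeSums

section CoherentState

variable {φ : ℝ × ℝ → ℂ} {x₀ ξ₀ v : ℝ × ℝ} {A K R hb e : ℝ} {a : ℝ × ℝ → ℝ → ℂ} {w : ℤ × ℤ}

lemma norm_psiF (φ : ℝ × ℝ → ℂ) (x₀ ξ₀ : ℝ × ℝ) (hb : ℝ) (m : ℤ × ℤ) :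
    ‖psiF φ x₀ ξ₀ hb m‖ = √hb * ‖FT φ (√hb • (toR2 m - hb⁻¹ • ξ₀))‖ := by
  rw [psiF, ← planeWave, norm_mul, norm_mul, norm_planeWave, mul_one, Complex.norm_real,
    norm_of_nonneg (sqrt_nonneg hb)]

lemma norm_psiF_le (hA : ∀ ξ, ‖FT φ ξ‖ ≤ A * (1 + dot2 v ξ ^ 2)⁻¹) (m : ℤ × ℤ) :
    ‖psiF φ x₀ ξ₀ hb m‖ ≤
      √hb * (A * (1 + (√hb * (dot2 v (toR2 m) - dot2 v (hb⁻¹ • ξ₀))) ^ 2)⁻¹) := by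
  rw [norm_psiF, ← dot2_sub_right, ← dot2_smul_right]
  gcongr
  exact hA _

lemma norm_psiF_le_const (hA : ∀ ξ, ‖FT φ ξ‖ ≤ A) (m : ℤ × ℤ) :
    ‖psiF φ x₀ ξ₀ hb m‖ ≤ √hb * A := by
  rw [norm_psiF]
  gcongr
  exact hA _

lemma fcoef_HH_eq_zero (hR : ∀ x η, R ≤ |η| → a x η = 0) (hw : w ≠ 0) (hb0 : 0 < hb) (he : 0 < e)
    (j : ℤ × ℤ) {m : ℤ × ℤ} (hm : R * LL w * e / (2 * π * hb ^ 2) ≤ |(dotZ m w : ℝ)|) :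
    fcoef a j (2 * π * hb ^ 2 / e * HH w (toR2 m)) = 0 := by
  have hL := LL_pos hw
  refine fcoef_eq_zero hR j ?_
  rw [HH, dot2_toR2, abs_mul, abs_div _ (LL w), abs_of_pos hL, abs_of_pos (by positivity)]
  calc R = 2 * π * hb ^ 2 / e * (R * LL w * e / (2 * π * hb ^ 2) / LL w) := by field_simp
    _ ≤ 2 * π * hb ^ 2 / e * (|(dotZ m w : ℝ)| / LL w) := by gcongr

lemma norm_tsum_psiF_mul_fcoef_le (hA : ∀ ξ, ‖FT φ ξ‖ ≤ A)
    (hK : ∀ (c : ℤ) η, ‖fcoef a (c • w) η‖ ≤ K * (1 + (c : ℝ) ^ 2)⁻¹) (m : ℤ × ℤ) (η : ℝ) :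
    ‖∑' c : ℤ, (starRingEnd ℂ) (psiF φ x₀ ξ₀ hb m) * psiF φ x₀ ξ₀ hb (m - c • w) *
        fcoef a (c • w) η‖ ≤
      ‖psiF φ x₀ ξ₀ hb m‖ * (√hb * A) * K * ∑' c : ℤ, (1 + (c : ℝ) ^ 2)⁻¹ := by
  have hsum : Summable fun c : ℤ => (1 + (c : ℝ) ^ 2)⁻¹ := by
    simpa using (summable_and_tsum_inv_one_add_sq_le one_pos le_rfl 0).1
  refine tsum_of_norm_bounded (hsum.hasSum.mul_left _) fun c => ?_
  rw [norm_mul, norm_mul, RCLike.norm_conj, mul_assoc _ K]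
  have hA0 : 0 ≤ A := (norm_nonneg _).trans (hA 0)
  gcongr
  · exact norm_psiF_le_const hA _
  · exact hK c η

lemma norm_Wcs_le (hA : ∀ ξ, ‖FT φ ξ‖ ≤ A * (1 + dot2 (toR2 (perpZ w)) ξ ^ 2)⁻¹)
    (hK : ∀ (c : ℤ) η, ‖fcoef a (c • w) η‖ ≤ K * (1 + (c : ℝ) ^ 2)⁻¹) (hR0 : 0 ≤ R)
    (hR : ∀ x η, R ≤ |η| → a x η = 0) (hw : w ≠ 0) (hb0 : 0 < hb) (hb1 : hb ≤ 1) (he : 0 < e) :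
    ‖Wcs φ x₀ ξ₀ w a hb e‖ ≤ hb * (A ^ 2 * K * ∑' c : ℤ, (1 + (c : ℝ) ^ 2)⁻¹) *
      ((2 * (R * LL w * e / (2 * π * hb ^ 2)) + 1) * (3 * π / √hb)) := by
  have hA0 : 0 ≤ A := by simpa [dot2] using (norm_nonneg _).trans (hA 0)
  have hK0 : 0 ≤ K := by simpa using (norm_nonneg _).trans (hK 0 0)
  have hA_const (ξ : ℝ × ℝ) : ‖FT φ ξ‖ ≤ A :=
    (hA ξ).trans (mul_le_of_le_one_right hA0 (inv_le_one_of_one_le₀ (by simp [sq_nonneg])))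
  have hL := LL_pos hw
  set B := R * LL w * e / (2 * π * hb ^ 2)
  set T := ∑' c : ℤ, (1 + (c : ℝ) ^ 2)⁻¹
  obtain ⟨hstrip, hstrip_le⟩ := summable_and_tsum_strip_le hw (sqrt_pos.2 hb0)
    (sqrt_le_one.2 hb1) (show 0 ≤ B by positivity) (dot2 (toR2 (perpZ w)) (hb⁻¹ • ξ₀))
  refine (tsum_of_norm_bounded (hstrip.hasSum.mul_left (hb * (A ^ 2 * K * T)))
    fun m => ?_).trans (by gcongr)
  by_cases hm : |(dotZ m w : ℝ)| ≤ B
  · have hψ := norm_psiF_le (x₀ := x₀) (ξ₀ := ξ₀) (hb := hb) hA m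
    rw [dot2_toR2] at hψ
    rw [if_pos hm, one_mul]
    refine (norm_tsum_psiF_mul_fcoef_le hA_const hK m _).trans ?_
    set D := (1 + (√hb * (dotZ (perpZ w) m - dot2 (toR2 (perpZ w)) (hb⁻¹ • ξ₀))) ^ 2)⁻¹
    calc ‖psiF φ x₀ ξ₀ hb m‖ * (√hb * A) * K * T
      _ ≤ √hb * (A * D) * (√hb * A) * K * T := by gcongr
      _ = hb * (A ^ 2 * K * T) * D := by
        linear_combination A ^ 2 * K * T * D * mul_self_sqrt hb0.le
  · have hzero (c : ℤ) := fcoef_HH_eq_zero hR hw hb0 he (c • w) (not_le.1 hm).le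
    simp only [hzero, mul_zero, tsum_zero, norm_zero, if_neg hm, zero_mul, le_refl]

lemma exists_norm_Wcs_le (hφ : ContDiff ℝ 2 φ) (hφc : HasCompactSupport φ)
    (ha : ContDiff ℝ 2 (Function.uncurry a)) (hper : ∀ η, TorusPeriodic fun x => a x η)
    (hR : ∀ x η, R ≤ |η| → a x η = 0) (hw : w ≠ 0) (x₀ ξ₀ : ℝ × ℝ) :
    ∃ C : ℝ, ∀ hb e : ℝ, 0 < hb → hb ≤ 1 → 0 < e →
      ‖Wcs φ x₀ ξ₀ w a hb e‖ ≤ C * (√hb + |R| * LL w / π * (e / hb ^ ((3 : ℝ) / 2))) := by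
  obtain ⟨A, hA⟩ := exists_norm_FT_le hφ hφc (toR2 (perpZ w))
  obtain ⟨K, hK⟩ := exists_norm_fcoef_zsmul_le ha hper hR hw
  refine ⟨3 * π * (A ^ 2 * K * ∑' c : ℤ, (1 + (c : ℝ) ^ 2)⁻¹), fun hb e hb0 hb1 he => ?_⟩
  refine (norm_Wcs_le hA hK (abs_nonneg R) (fun x η h => hR x η ((le_abs_self R).trans h))
    hw hb0 hb1 he).trans_eq ?_
  have hpow : hb ^ ((3 : ℝ) / 2) = hb * √hb := by
    rw [sqrt_eq_rpow, ← rpow_one_add' hb0.le (by norm_num)]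
    norm_num
  obtain ⟨s, hs, rfl⟩ : ∃ s : ℝ, 0 < s ∧ s ^ 2 = hb := ⟨√hb, sqrt_pos.2 hb0, sq_sqrt hb0.le⟩
  rw [hpow, sqrt_sq hs.le]
  field_simp
  ring

end CoherentState

lemma hasCompactSupport_of_abs_lt {E : Type*} [Zero E] {φ : ℝ × ℝ → E} {r : ℝ}
    (hφ : ∀ x : ℝ × ℝ, φ x ≠ 0 → |x.1| < r ∧ |x.2| < r) : HasCompactSupport φ := by
  refine .intro (isCompact_Icc (a := ((-r, -r) : ℝ × ℝ)) (b := (r, r))) fun x hx => ?_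
  by_contra h
  obtain ⟨h₁, h₂⟩ := hφ x h
  rw [abs_lt] at h₁ h₂
  exact hx ⟨⟨h₁.1.le, h₂.1.le⟩, h₁.2.le, h₂.2.le⟩

theorem stmt4_general {ε : ℝ → ℝ} (hε : ∀ᶠ hb in 𝓝[>] (0 : ℝ), 0 < ε hb)
    (hε32 : Tendsto (fun hb => ε hb / hb ^ ((3 : ℝ) / 2)) (𝓝[>] (0 : ℝ)) (𝓝 0))
    {φ : ℝ × ℝ → ℂ} (hφ : ContDiff ℝ 2 φ) (hφc : HasCompactSupport φ) (x₀ ξ₀ : ℝ × ℝ)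
    {a : ℝ × ℝ → ℝ → ℂ} (ha : ContDiff ℝ 2 fun p : (ℝ × ℝ) × ℝ => a p.1 p.2)
    (ha_per : ∀ (x : ℝ × ℝ) (η : ℝ) (j : ℤ × ℤ), a (x + toR2 j) η = a x η)
    (ha_supp : ∃ R : ℝ, ∀ (x : ℝ × ℝ) (η : ℝ), R ≤ |η| → a x η = 0) {w : ℤ × ℤ} (hw : w ≠ 0) :
    Tendsto (fun hb => Wcs φ x₀ ξ₀ w a hb (ε hb)) (𝓝[>] (0 : ℝ)) (𝓝 0) := by
  obtain ⟨R, hR⟩ := ha_supp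
  obtain ⟨C, hC⟩ := exists_norm_Wcs_le hφ hφc ha (fun η j x => ha_per x η j) hR hw x₀ ξ₀
  have hsqrt : Tendsto (fun hb : ℝ => √hb) (𝓝[>] 0) (𝓝 0) := by
    simpa using (continuous_sqrt.tendsto 0).mono_left nhdsWithin_le_nhds
  have hbound : Tendsto (fun hb => C * (√hb + |R| * LL w / π * (ε hb / hb ^ ((3 : ℝ) / 2))))
      (𝓝[>] 0) (𝓝 0) := by
    simpa using (hsqrt.add (hε32.const_mul (|R| * LL w / π))).const_mul C
  refine squeeze_zero_norm' ?_ hbound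
  filter_upwards [hε, Ioc_mem_nhdsGT one_pos] with hb he hhb
  exact hC hb (ε hb) hhb.1 hhb.2 he

/-- coherent states, small perturbations `hb² ≪ ε_hb ≪ hb^{3/2}`:
the two-microlocal quantities of a periodized coherent state with `ξ₀ ≠ 0`
tend to `0` for every primitive rank-1 sublattice. -/
theorem stmt4
    (ε : ℝ → ℝ) (hεpos : ∀ hb ∈ Set.Ioc (0:ℝ) 1, 0 < ε hb)
    (hε2 : Tendsto (fun hb => ε hb / hb ^ 2) (𝓝[>] (0:ℝ)) atTop)
    (hε32 : Tendsto (fun hb => ε hb / hb ^ ((3:ℝ)/2)) (𝓝[>] (0:ℝ)) (𝓝 0))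
    (φ : ℝ × ℝ → ℂ) (hφ_smooth : ContDiff ℝ (⊤ : ℕ∞) φ)
    (hφ_supp : ∀ x : ℝ × ℝ, φ x ≠ 0 → |x.1| < 1/2 ∧ |x.2| < 1/2)
    (hφ_norm : ∫ x : ℝ × ℝ, ‖φ x‖ ^ 2 = 1)
    (x₀ ξ₀ : ℝ × ℝ) (hξ₀ : ξ₀ ≠ 0)
    (a : ℝ × ℝ → ℝ → ℂ)
    (ha_smooth : ContDiff ℝ (⊤ : ℕ∞) fun p : (ℝ × ℝ) × ℝ => a p.1 p.2)
    (ha_per : ∀ (x : ℝ × ℝ) (η : ℝ) (j : ℤ × ℤ), a (x + toR2 j) η = a x η)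
    (ha_supp : ∃ R : ℝ, ∀ (x : ℝ × ℝ) (η : ℝ), R ≤ |η| → a x η = 0) :
    ∀ w : ℤ × ℤ, Primitive w →
      Tendsto (fun hb => Wcs φ x₀ ξ₀ w a hb (ε hb)) (𝓝[>] (0:ℝ)) (𝓝 0) := by
  intro w hw
  exact stmt4_general (by filter_upwards [Ioc_mem_nhdsGT one_pos] using hεpos) hε32
    (contDiff_infty.1 hφ_smooth 2) (hasCompactSupport_of_abs_lt hφ_supp) x₀ ξ₀
    (contDiff_infty.1 ha_smooth 2) ha_per ha_supp (by rintro rfl; simp [Primitive] at hw)
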